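/- arXiv:1905.13602 — 2 statements merged into one kernel-verified Lean document; each statement's English description precedes it below -/
import Mathlib

section
/- For every natural number n and every x in the open interval (−1,1), −(1/(2π))·∫_{−1}^{1} ln|x−y| · Tₙ(y)/√(1−y²) dy = σₙ·Tₙ(x), where σ₀ = ln(2)/2 and σₙ = 1/(2n) for n ≥ 1. -/
open Real Set MeasureTheory intervalIntegral

/-- The `n`-th Chebyshev polynomial of the first kind, as a real function. -/
noncomputable def chebT (n : ℕ) : ℝ → ℝ := fun x => (Polynomial.Chebyshev.T ℝ n).eval x

/-- The eigenvalues of the weighted Laplace single-layer operator: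
`σ₀ = ln 2 / 2` and `σₙ = 1/(2n)` for `n ≥ 1`. -/
noncomputable def sigmaCheb : ℕ → ℝ := fun n =>
  if n = 0 then Real.log 2 / 2 else 1 / (2 * n)

/-- The closed form of `cot t * sin (2 * n * t)` as a cosine sum, cleared of denominators. -/
theorem sum_cos_add_cos_mul_sin (n : ℕ) (t : ℝ) :
    (∑ k ∈ Finset.range n, (cos (2 * k * t) + cos (2 * (k + 1) * t))) * sin t
      = sin (2 * n * t) * cos t := by
  induction n with
  | zero => simp
  | succ n ih =>
    rw [Finset.sum_range_succ, add_mul, ih]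
    push_cast
    rw [show 2 * ((n : ℝ) + 1) * t = 2 * n * t + 2 * t by ring, sin_add, cos_add, sin_two_mul,
      cos_two_mul]
    linear_combination (-2 * sin (2 * n * t) * cos t) * sin_sq_add_cos_sq t

theorem integral_cos_natCast_mul_zero_pi {n : ℕ} (hn : n ≠ 0) :
    ∫ t in (0 : ℝ)..π, cos (n * t) = 0 := by
  rw [integral_comp_mul_left _ (Nat.cast_ne_zero.mpr hn)]
  simp [sin_nat_mul_pi]

theorem integral_sum_cos_add_cos {n : ℕ} (hn : n ≠ 0) :
    ∫ t in (0 : ℝ)..π, ∑ k ∈ Finset.range n, (cos (2 * k * t) + cos (2 * (k + 1) * t)) = π := by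
  have hcos (k : ℕ) : ∫ t in (0 : ℝ)..π, cos (2 * (k + 1) * t) = 0 := by
    simpa using integral_cos_natCast_mul_zero_pi (n := 2 * (k + 1)) (by lia)
  have h_int (a : ℝ) : IntervalIntegrable (fun t => cos (a * t)) volume 0 π :=
    (by fun_prop : Continuous fun t => cos (a * t)).intervalIntegrable _ _
  rw [intervalIntegral.integral_finsetSum fun k _ => (h_int _).add (h_int _)]
  simp_rw [fun k : ℕ => intervalIntegral.integral_add (h_int (2 * k)) (h_int (2 * (k + 1))), hcos]
  obtain ⟨m, rfl⟩ := Nat.exists_eq_succ_of_ne_zero hn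
  rw [Finset.sum_range_succ']
  simp [hcos]

theorem continuous_log_sin_mul_sin (n : ℕ) :
    Continuous fun t : ℝ => log (sin t) * sin (2 * n * t) := by
  have h : (fun t : ℝ => log (sin t) * sin (2 * n * t)) = fun t =>
      (sin t * log (sin t)) * (Polynomial.Chebyshev.U ℝ (2 * n - 1)).eval (cos t) := by
    funext t
    have := Polynomial.Chebyshev.U_real_cos t (2 * n - 1)
    push_cast at this
    rw [sub_add_cancel] at this
    rw [← this]
    ring
  rw [h]
  exact (continuous_mul_log.comp continuous_sin).mul
    ((Polynomial.continuous _).comp continuous_cos)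

theorem integral_log_sin_mul_cos {n : ℕ} (hn : n ≠ 0) :
    ∫ t in (0 : ℝ)..π, log (sin t) * cos (2 * n * t) = -π / (2 * n) := by
  have hn' : (n : ℝ) ≠ 0 := Nat.cast_ne_zero.mpr hn
  have hlog : IntervalIntegrable (fun t => log (sin t) * cos (2 * n * t)) volume 0 π :=
    IntervalIntegrable.mul_continuousOn intervalIntegrable_log_sin (by fun_prop)
  have hsum : IntervalIntegrable (fun t => (∑ k ∈ Finset.range n,
      (cos (2 * k * t) + cos (2 * (k + 1) * t))) / (2 * n)) volume 0 π :=
    (by fun_prop : Continuous _).intervalIntegrable _ _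
  have key := integral_eq_sub_of_hasDerivAt_of_le pi_nonneg
    ((continuous_log_sin_mul_sin n).div_const (2 * n)).continuousOn
    (f' := fun t => (∑ k ∈ Finset.range n, (cos (2 * k * t) + cos (2 * (k + 1) * t))) / (2 * n)
      + log (sin t) * cos (2 * n * t)) (fun t ht => ?_) (hsum.add hlog)
  · rw [intervalIntegral.integral_add hsum hlog, intervalIntegral.integral_div,
      integral_sum_cos_add_cos hn] at key
    simp only [sin_zero, sin_pi, log_zero, zero_mul, zero_div, sub_zero] at key
    rw [neg_div]
    linarith
  · have hs : sin t ≠ 0 := (sin_pos_of_mem_Ioo ht).ne'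
    have hd := (((hasDerivAt_sin t).log hs).mul
      ((hasDerivAt_id t).const_mul (2 * (n : ℝ))).sin).div_const (2 * n)
    convert! hd using 1
    rw [eq_div_of_mul_eq hs (sum_cos_add_cos_mul_sin n t)]
    simp only [id]
    field_simp

theorem intervalIntegrable_log_sin_half_add (c a b : ℝ) :
    IntervalIntegrable (fun t => log (sin ((t + c) / 2))) volume a b := by
  apply MeromorphicOn.intervalIntegrable_log
  intro t _
  exact AnalyticAt.meromorphicAt (by fun_prop)

theorem periodic_log_sin_half : Function.Periodic (fun u : ℝ => log (sin (u / 2))) (2 * π) := by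
  intro u
  simp [show (u + 2 * π) / 2 = u / 2 + π by ring, sin_add_pi]

theorem integral_log_sin_half_mul_cos (n : ℕ) :
    ∫ u in (0 : ℝ)..2 * π, log (sin (u / 2)) * cos (n * u)
      = 2 * ∫ t in (0 : ℝ)..π, log (sin t) * cos (2 * n * t) := by
  have h := intervalIntegral.integral_comp_div (a := 0) (b := 2 * π)
    (fun t => log (sin t) * cos (2 * n * t)) (two_ne_zero (α := ℝ))
  simp only [zero_div, mul_div_cancel_left₀ π (two_ne_zero (α := ℝ)), smul_eq_mul] at h
  rw [← h]
  congr 1 with u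
  ring_nf

theorem integral_log_sin_half_mul_sin (n : ℕ) :
    ∫ u in (0 : ℝ)..2 * π, log (sin (u / 2)) * sin (n * u) = 0 := by
  have h := intervalIntegral.integral_comp_sub_left (a := 0) (b := 2 * π)
    (fun u => log (sin (u / 2)) * sin (n * u)) (2 * π)
  have hneg (u : ℝ) : log (sin ((2 * π - u) / 2)) * sin (n * (2 * π - u))
      = -(log (sin (u / 2)) * sin (n * u)) := by
    rw [show (2 * π - u) / 2 = π - u / 2 by ring, sin_pi_sub, mul_sub,
      sin_nat_mul_two_pi_sub]
    ring
  simp only [hneg, intervalIntegral.integral_neg, sub_self, sub_zero] at h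
  linarith

theorem integral_log_sin_half_sub_mul_cos (n : ℕ) (φ : ℝ) :
    ∫ θ in -π..π, log (sin ((θ - φ) / 2)) * cos (n * θ)
      = cos (n * φ) * (2 * ∫ t in (0 : ℝ)..π, log (sin t) * cos (2 * n * t)) := by
  have hper : Function.Periodic (fun u : ℝ => log (sin (u / 2)) * cos (n * (u + φ))) (2 * π) := by
    refine periodic_log_sin_half.mul fun u => ?_
    rw [show (n : ℝ) * (u + 2 * π + φ) = n * (u + φ) + n * (2 * π) by ring,
      cos_add_nat_mul_two_pi]
  have h_int {g : ℝ → ℝ} (hg : Continuous g) :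
      IntervalIntegrable (fun u => log (sin (u / 2)) * g u) volume 0 (2 * π) := by
    simpa using (intervalIntegrable_log_sin_half_add 0 0 (2 * π)).mul_continuousOn hg.continuousOn
  calc ∫ θ in -π..π, log (sin ((θ - φ) / 2)) * cos (n * θ)
    _ = ∫ u in (-π - φ)..(π - φ), log (sin (u / 2)) * cos (n * (u + φ)) := by
      rw [← intervalIntegral.integral_comp_sub_right
        (fun u => log (sin (u / 2)) * cos (n * (u + φ))) φ]
      simp
    _ = ∫ u in (0 : ℝ)..2 * π, log (sin (u / 2)) * cos (n * (u + φ)) := by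
      have := hper.intervalIntegral_add_eq (-π - φ) 0
      rwa [zero_add, show -π - φ + 2 * π = π - φ by ring] at this
    _ = ∫ u in (0 : ℝ)..2 * π, (cos (n * φ) * (log (sin (u / 2)) * cos (n * u))
          - sin (n * φ) * (log (sin (u / 2)) * sin (n * u))) := by
      congr 1 with u
      rw [mul_add, cos_add]
      ring
    _ = _ := by
      rw [intervalIntegral.integral_sub ((h_int (by fun_prop)).const_mul _)
        ((h_int (by fun_prop)).const_mul _), intervalIntegral.integral_const_mul,
        intervalIntegral.integral_const_mul, integral_log_sin_half_mul_sin,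
        integral_log_sin_half_mul_cos, mul_zero, sub_zero]

theorem log_abs_cos_sub_cos {θ φ : ℝ} (h : cos φ ≠ cos θ) :
    log |cos φ - cos θ| = log 2 + log (sin ((θ + φ) / 2)) + log (sin ((θ - φ) / 2)) := by
  have hprod : cos φ - cos θ = 2 * sin ((θ + φ) / 2) * sin ((θ - φ) / 2) := by
    rw [cos_sub_cos, add_comm φ θ, ← neg_sub θ φ, neg_div, sin_neg]
    ring
  have hne : 2 * sin ((θ + φ) / 2) * sin ((θ - φ) / 2) ≠ 0 := hprod ▸ sub_ne_zero.mpr h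
  rw [log_abs, hprod, log_mul (left_ne_zero_of_mul hne) (right_ne_zero_of_mul hne),
    log_mul two_ne_zero (right_ne_zero_of_mul (left_ne_zero_of_mul hne))]

theorem integral_log_abs_cos_sub_cos_mul_cos (n : ℕ) {φ : ℝ} (hφ : φ ∈ Icc 0 π) :
    ∫ θ in (0 : ℝ)..π, log |cos φ - cos θ| * cos (n * θ)
      = log 2 * (∫ θ in (0 : ℝ)..π, cos (n * θ))
        + cos (n * φ) * (2 * ∫ t in (0 : ℝ)..π, log (sin t) * cos (2 * n * t)) := by
  have hcos : Continuous fun θ : ℝ => cos (n * θ) := by fun_prop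
  have h_int (c a b : ℝ) :
      IntervalIntegrable (fun θ => log (sin ((θ + c) / 2)) * cos (n * θ)) volume a b :=
    (intervalIntegrable_log_sin_half_add c a b).mul_continuousOn hcos.continuousOn
  have h_int_sub (a b : ℝ) :
      IntervalIntegrable (fun θ => log (sin ((θ - φ) / 2)) * cos (n * θ)) volume a b := by
    simpa [sub_eq_add_neg] using h_int (-φ) a b
  have hreflect : ∫ θ in (0 : ℝ)..π, log (sin ((θ + φ) / 2)) * cos (n * θ)
      = ∫ θ in -π..0, log (sin ((θ - φ) / 2)) * cos (n * θ) := by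
    have := intervalIntegral.integral_comp_neg (a := 0) (b := π)
      (fun θ => log (sin ((θ - φ) / 2)) * cos (n * θ))
    rw [neg_zero] at this
    rw [← this]
    congr 1 with θ
    rw [show (-θ - φ) / 2 = -((θ + φ) / 2) by ring, sin_neg, log_neg_eq_log, mul_neg, cos_neg]
  calc ∫ θ in (0 : ℝ)..π, log |cos φ - cos θ| * cos (n * θ)
    _ = ∫ θ in (0 : ℝ)..π, (log 2 * cos (n * θ) + log (sin ((θ + φ) / 2)) * cos (n * θ)
          + log (sin ((θ - φ) / 2)) * cos (n * θ)) := by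
      refine intervalIntegral.integral_congr_ae ?_
      filter_upwards [compl_mem_ae_iff.mpr (measure_singleton φ)] with θ hne hθ
      rw [uIoc_of_le pi_nonneg] at hθ
      rw [log_abs_cos_sub_cos fun h => hne (injOn_cos hφ (Ioc_subset_Icc_self hθ) h).symm]
      ring
    _ = _ := by
      rw [intervalIntegral.integral_add
          (((hcos.intervalIntegrable _ _).const_mul _).add (h_int φ 0 π)) (h_int_sub 0 π),
        intervalIntegral.integral_add ((hcos.intervalIntegrable _ _).const_mul _) (h_int φ 0 π),
        intervalIntegral.integral_const_mul, hreflect, add_assoc,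
        intervalIntegral.integral_add_adjacent_intervals (h_int_sub _ _) (h_int_sub _ _),
        integral_log_sin_half_sub_mul_cos]

theorem chebT_cos (n : ℕ) (θ : ℝ) : chebT n (cos θ) = cos (n * θ) := by
  simp [chebT]

/-- The Chebyshev polynomials `Tₙ` are eigenfunctions of the weighted Laplace
single-layer operator, with eigenvalues `σₙ`. -/
theorem weighted_single_layer_chebT_eigen (n : ℕ) (x : ℝ) (hx : x ∈ Ioo (-1 : ℝ) 1) :
    -(1 / (2 * π)) * ∫ y in (-1 : ℝ)..1,
        Real.log |x - y| * chebT n y / Real.sqrt (1 - y ^ 2)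
      = sigmaCheb n * chebT n x := by
  obtain ⟨φ, hφ, rfl⟩ : ∃ φ ∈ Icc 0 π, cos φ = x :=
    ⟨arccos x, ⟨arccos_nonneg x, arccos_le_pi x⟩, cos_arccos hx.1.le hx.2.le⟩
  have hsubst : ∫ y in (-1 : ℝ)..1, log |cos φ - y| * chebT n y / √(1 - y ^ 2)
      = ∫ θ in (0 : ℝ)..π, log |cos φ - cos θ| * cos (n * θ) := by
    simp_rw [← chebT_cos]
    rw [← Polynomial.Chebyshev.integral_measureT_eq_integral_cos
      (f := fun y => log |cos φ - y| * chebT n y), Polynomial.Chebyshev.integral_measureT]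
    simp [div_eq_mul_inv]
  rw [hsubst, integral_log_abs_cos_sub_cos_mul_cos n hφ, chebT_cos, sigmaCheb]
  split_ifs with hn
  · subst hn
    simp only [CharP.cast_eq_zero, zero_mul, mul_zero, cos_zero, mul_one, one_mul,
      intervalIntegral.integral_const, smul_eq_mul, sub_zero, integral_log_sin_zero_pi]
    field_simp
    ring
  · rw [integral_cos_natCast_mul_zero_pi hn, integral_log_sin_mul_cos hn]
    field_simp
    ring
end

section
/- Let f be a measurable real-valued function on (−1,1) with ∫_{−1}^{1} f(x)²/√(1−x²) dx < ∞, and define its Fourier–Chebyshev coefficients by â₀ = (1/π)∫_{−1}^{1} f(x)/√(1−x²) dx and âₙ = (2/π)∫_{−1}^{1} f(x)·Tₙ(x)/√(1−x²) dx for n ≥ 1. Then the following are equivalent: (i) for every natural number s, Σ_{n=0}^{∞} (1+n²)^s·âₙ² < ∞; (ii) there exists an infinitely differentiable function g : ℝ → ℝ such that f = g almost everywhere on (−1,1). (This is the identification T^∞ = C^∞([−1,1]).) -/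
open Real Set MeasureTheory

/-- The Fourier–Chebyshev coefficients of a function on `(-1,1)`. -/
noncomputable def fourierCheb (f : ℝ → ℝ) : ℕ → ℝ := fun n =>
  if n = 0 then (1 / π) * ∫ x in Ioo (-1 : ℝ) 1, f x / Real.sqrt (1 - x ^ 2)
  else (2 / π) * ∫ x in Ioo (-1 : ℝ) 1, f x * chebT n x / Real.sqrt (1 - x ^ 2)

theorem contDiff_polynomial_eval (p : Polynomial ℝ) :
    ContDiff ℝ (⊤ : ℕ∞) fun x => p.eval x := by
  simpa using p.contDiff_aeval (𝕜 := ℝ) (⊤ : ℕ∞)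

theorem iteratedDeriv_polynomial_eval (p : Polynomial ℝ) (k : ℕ) :
    iteratedDeriv k (fun x => p.eval x) = fun x => (Polynomial.derivative^[k] p).eval x := by
  induction k generalizing p with
  | zero => simp
  | succ k ih =>
    rw [iteratedDeriv_succ', show deriv (fun x => p.eval x) = fun x => p.derivative.eval x from
      funext fun x => p.deriv, ih, Function.iterate_succ_apply]

theorem abs_eval_T_le_cosh_two {m : ℕ} {N x : ℝ} (hN : 0 < N) (hm : (m : ℝ) ^ 2 ≤ N)
    (hx : |x| ≤ 1 + N⁻¹) : |(Polynomial.Chebyshev.T ℝ m).eval x| ≤ cosh 2 := by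
  wlog hx0 : 0 ≤ x generalizing x
  · have := this (x := -x) (by simpa using hx) (by linarith)
    rw [Polynomial.Chebyshev.T_eval_neg] at this
    rcases Int.even_or_odd (m : ℤ) with h | h <;> simpa [h, Int.negOnePow_even, Int.negOnePow_odd] using this
  rw [abs_of_nonneg hx0] at hx
  rcases le_total x 1 with h1 | h1
  · rw [← cos_arccos (by linarith) h1, Polynomial.Chebyshev.T_real_cos]
    exact (abs_cos_le_one _).trans (one_le_cosh 2)
  · obtain ⟨t, ht0, rfl⟩ : ∃ t, 0 ≤ t ∧ cosh t = x := ⟨arcosh x, arcosh_nonneg h1, cosh_arcosh h1⟩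
    rw [Polynomial.Chebyshev.T_real_cosh, abs_of_pos (cosh_pos _), cosh_le_cosh]
    have h2 : t / 2 ≤ sinh (t / 2) := self_le_sinh_iff.2 (by linarith)
    have h3 : cosh t = 1 + 2 * sinh (t / 2) ^ 2 := by
      have := cosh_two_mul (t / 2)
      rw [cosh_sq, mul_div_cancel₀ _ two_ne_zero] at this
      linarith
    have h4 : t ^ 2 ≤ 2 * N⁻¹ := by nlinarith
    have h5 : ((m : ℝ) * t) ^ 2 ≤ 2 ^ 2 := by
      calc ((m : ℝ) * t) ^ 2 = (m : ℝ) ^ 2 * t ^ 2 := by ring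
        _ ≤ N * (2 * N⁻¹) := by gcongr
        _ = 2 := by field_simp
        _ ≤ 2 ^ 2 := by norm_num
    simpa using sq_le_sq.1 h5

open Polynomial Polynomial.Chebyshev in
/-- Derivatives of `T m` for `m ≤ n` at a point are controlled by the values there. -/
theorem abs_eval_iterate_derivative_T_le {n : ℕ} {x M : ℝ}
    (h : ∀ m : ℕ, m ≤ n → |(T ℝ m).eval x| ≤ M) (k m : ℕ) (hm : m ≤ n) :
    |(derivative^[k] (T ℝ m)).eval x| ≤ (2 * (n + 1 : ℝ) ^ 2) ^ k * M := by
  induction k generalizing m with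
  | zero => simpa using h m hm
  | succ k ih =>
    set B := (2 * (n + 1 : ℝ) ^ 2) ^ k * M
    have hB : 0 ≤ B := (abs_nonneg _).trans (ih 0 (Nat.zero_le n))
    have h_two (p : ℝ[X]) : derivative^[k] (2 * p) = 2 * derivative^[k] p := by
      simpa using iterate_derivative_natCast_mul (n := 2) (k := k) (f := p)
    have hU : ∀ j : ℕ, j ≤ n → |(derivative^[k] (U ℝ j)).eval x| ≤ 2 * (j + 1) * B := by
      intro j
      induction j using Nat.twoStepInduction with
      | zero =>
        intro _
        have := ih 0 (Nat.zero_le n)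
        simp only [Nat.cast_zero, T_zero, U_zero] at this ⊢
        linarith
      | one =>
        intro h1
        have := ih 1 h1
        simp only [Nat.cast_one, T_one, U_one] at this ⊢
        rw [h_two]
        simp only [eval_mul, eval_ofNat, abs_mul]
        norm_num
        linarith
      | more j h1 _ =>
        intro hj
        have h2 := h1 (by omega)
        have h3 := ih (j + 2) hj
        push_cast at h3 ⊢
        rw [U_eq_two_mul_T_add_U, iterate_map_add, h_two]
        simp only [eval_add, eval_mul, eval_ofNat]
        refine (abs_add_le _ _).trans ?_
        rw [abs_mul, abs_two]
        linarith
    rw [Function.iterate_succ_apply, T_derivative_eq_U]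
    cases m with
    | zero =>
      simp only [Nat.cast_zero, Int.cast_zero, zero_mul, iterate_derivative_zero, eval_zero, abs_zero]
      rw [pow_succ, mul_right_comm]
      exact mul_nonneg hB (by positivity)
    | succ m =>
      have h1 := hU m (by omega)
      have h2 : ((m : ℝ) + 1) ≤ n + 1 := by exact_mod_cast Nat.le_succ_of_le hm
      push_cast
      rw [add_sub_cancel_right, show ((m : ℝ[X]) + 1) = ((m + 1 : ℕ) : ℝ[X]) by simp,
        iterate_derivative_natCast_mul, eval_mul, eval_natCast, abs_mul, Nat.abs_cast, pow_succ]
      calc ((m + 1 : ℕ) : ℝ) * _ ≤ ((m + 1 : ℕ) : ℝ) * (2 * (m + 1) * B) := by gcongr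
        _ = 2 * ((m : ℝ) + 1) ^ 2 * B := by push_cast; ring
        _ ≤ 2 * ((n : ℝ) + 1) ^ 2 * B := by gcongr
        _ = _ := by simp only [B]; ring

/-- A sequence of functions whose derivatives of every order grow at most polynomially in the
index, uniformly over the sets `S n`. -/
def PolyBoundedDerivs (F : ℕ → ℝ → ℝ) (S : ℕ → Set ℝ) : Prop :=
  ∀ k : ℕ, ∃ C : ℝ, ∃ p : ℕ, 0 ≤ C ∧ ∀ n, ∀ x ∈ S n,
    ‖iteratedFDeriv ℝ k (F n) x‖ ≤ C * (n + 1 : ℝ) ^ p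

theorem PolyBoundedDerivs.mul {F G : ℕ → ℝ → ℝ} {S : ℕ → Set ℝ}
    (hF : PolyBoundedDerivs F S) (hG : PolyBoundedDerivs G S)
    (hF' : ∀ n, ContDiff ℝ (⊤ : ℕ∞) (F n)) (hG' : ∀ n, ContDiff ℝ (⊤ : ℕ∞) (G n)) :
    PolyBoundedDerivs (fun n x => F n x * G n x) S := by
  intro k
  choose C p hC h using hF
  choose D q hD h' using hG
  refine ⟨∑ i ∈ Finset.range (k + 1), (k.choose i : ℝ) * C i * D (k - i),
    ∑ i ∈ Finset.range (k + 1), (p i + q (k - i)),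
    Finset.sum_nonneg fun i _ => mul_nonneg (mul_nonneg (by positivity) (hC i)) (hD _), ?_⟩
  intro n x hx
  refine (norm_iteratedFDeriv_mul_le (hF' n) (hG' n) x (by exact_mod_cast le_top)).trans ?_
  rw [Finset.sum_mul]
  refine Finset.sum_le_sum fun i hi => ?_
  have h1 : (n + 1 : ℝ) ^ (p i + q (k - i)) ≤
      (n + 1 : ℝ) ^ (∑ i ∈ Finset.range (k + 1), (p i + q (k - i))) :=
    pow_le_pow_right₀ (by linarith [n.cast_nonneg (α := ℝ)])
      (Finset.single_le_sum (f := fun i => p i + q (k - i)) (fun _ _ => Nat.zero_le _) hi)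
  calc (k.choose i : ℝ) * ‖iteratedFDeriv ℝ i (F n) x‖ * ‖iteratedFDeriv ℝ (k - i) (G n) x‖
      ≤ (k.choose i : ℝ) * (C i * (n + 1 : ℝ) ^ p i) * (D (k - i) * (n + 1 : ℝ) ^ q (k - i)) := by
        gcongr
        · exact mul_nonneg (by positivity) (mul_nonneg (hC i) (by positivity))
        · exact h i n x hx
        · exact h' _ n x hx
    _ = (k.choose i : ℝ) * C i * D (k - i) * (n + 1 : ℝ) ^ (p i + q (k - i)) := by ring
    _ ≤ _ := by
      have := hC i
      have := hD (k - i)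
      gcongr

theorem exists_bound_iteratedDeriv_smoothTransition (k : ℕ) :
    ∃ C, ∀ x, ‖iteratedDeriv k smoothTransition x‖ ≤ C := by
  cases k with
  | zero =>
    refine ⟨1, fun x => ?_⟩
    simpa [abs_of_nonneg (smoothTransition.nonneg x)] using smoothTransition.le_one x
  | succ k =>
    have hs : ContDiff ℝ (⊤ : ℕ∞) smoothTransition := smoothTransition.contDiff
    have hd : ContDiff ℝ (⊤ : ℕ∞) (deriv smoothTransition) :=
      (contDiff_infty_iff_deriv.1 hs).2
    have hc : HasCompactSupport (deriv smoothTransition) := by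
      refine HasCompactSupport.intro (isCompact_Icc (a := (0 : ℝ)) (b := 1)) fun x hx => ?_
      rw [mem_Icc, not_and_or, not_le, not_le] at hx
      rcases hx with hx | hx
      · have : smoothTransition =ᶠ[nhds x] fun _ => 0 := by
          filter_upwards [Iio_mem_nhds hx] with y hy
          exact smoothTransition.zero_of_nonpos (le_of_lt hy)
        rw [this.deriv_eq, deriv_const]
      · have : smoothTransition =ᶠ[nhds x] fun _ => 1 := by
          filter_upwards [Ioi_mem_nhds hx] with y hy
          exact smoothTransition.one_of_one_le (le_of_lt hy)
        rw [this.deriv_eq, deriv_const]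
    obtain ⟨C, hC⟩ := (hc.iteratedFDeriv (𝕜 := ℝ) k).exists_bound_of_continuous
      (hd.continuous_iteratedFDeriv (m := k) (by exact_mod_cast le_top))
    refine ⟨C, fun x => ?_⟩
    rw [iteratedDeriv_succ', ← norm_iteratedFDeriv_eq_norm_iteratedDeriv]
    exact hC x

theorem iteratedDeriv_comp_affine {s : ℝ → ℝ} (hs : ContDiff ℝ (⊤ : ℕ∞) s) (a b : ℝ) (k : ℕ) (x : ℝ) :
    iteratedDeriv k (fun x => s (a * x + b)) x = a ^ k * iteratedDeriv k s (a * x + b) := by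
  have h : ContDiff ℝ k (fun y => s (y + b)) := (hs.of_le (by exact_mod_cast le_top)).comp
    (contDiff_id.add contDiff_const)
  have := congrFun (iteratedDeriv_comp_const_mul h a) x
  rw [this, iteratedDeriv_comp_add_const]

theorem polyBoundedDerivs_smoothTransition_comp {a b : ℕ → ℝ}
    (ha : ∀ n, |a n| ≤ (n + 1 : ℝ) ^ 2) (S : ℕ → Set ℝ) :
    PolyBoundedDerivs (fun n x => smoothTransition (a n * x + b n)) S := by
  intro k
  obtain ⟨C, hC⟩ := exists_bound_iteratedDeriv_smoothTransition k
  have hC0 : 0 ≤ C := (norm_nonneg _).trans (hC 0)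
  refine ⟨C, 2 * k, hC0, fun n x _ => ?_⟩
  rw [norm_iteratedFDeriv_eq_norm_iteratedDeriv,
    iteratedDeriv_comp_affine smoothTransition.contDiff, norm_mul, norm_pow, mul_comm, pow_mul]
  gcongr
  · exact hC _
  · exact ha n

/-- Chebyshev polynomials cut off outside a neighbourhood of `[-1, 1]` of size `1 / (n + 1) ^ 2`. -/
noncomputable def cutoffT (n : ℕ) (x : ℝ) : ℝ :=
  smoothTransition ((n + 1 : ℝ) ^ 2 * x + ((n + 1) ^ 2 + 1)) *
    smoothTransition (-(n + 1 : ℝ) ^ 2 * x + ((n + 1) ^ 2 + 1)) *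
    (Polynomial.Chebyshev.T ℝ n).eval x

theorem contDiff_cutoffT (n : ℕ) : ContDiff ℝ (⊤ : ℕ∞) (cutoffT n) := by
  have h (a b : ℝ) : ContDiff ℝ (⊤ : ℕ∞) fun x => smoothTransition (a * x + b) :=
    smoothTransition.contDiff.comp ((contDiff_const.mul contDiff_id).add contDiff_const)
  exact ((h _ _).mul (h _ _)).mul (contDiff_polynomial_eval _)

theorem cutoffT_eq_of_mem {x : ℝ} (n : ℕ) (hx : x ∈ Icc (-1) 1) :
    cutoffT n x = (Polynomial.Chebyshev.T ℝ n).eval x := by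
  have h : (0 : ℝ) < (n + 1) ^ 2 := by positivity
  rw [cutoffT, smoothTransition.one_of_one_le (by nlinarith [hx.1]),
    smoothTransition.one_of_one_le (by nlinarith [hx.2]), one_mul, one_mul]

theorem cutoffT_eq_zero {x : ℝ} (n : ℕ) (hx : 1 + ((n + 1 : ℝ) ^ 2)⁻¹ ≤ |x|) :
    cutoffT n x = 0 := by
  have h : (0 : ℝ) < (n + 1) ^ 2 := by positivity
  have h1 : (n + 1 : ℝ) ^ 2 + 1 ≤ (n + 1) ^ 2 * |x| := by
    have := mul_le_mul_of_nonneg_left hx h.le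
    rwa [mul_add, mul_one, mul_inv_cancel₀ h.ne'] at this
  rcases le_total 0 x with h0 | h0
  · rw [abs_of_nonneg h0] at h1
    rw [cutoffT, smoothTransition.zero_of_nonpos (x := -(n + 1 : ℝ) ^ 2 * x + _) (by linarith)]
    simp
  · rw [abs_of_nonpos h0] at h1
    rw [cutoffT, smoothTransition.zero_of_nonpos (x := (n + 1 : ℝ) ^ 2 * x + _) (by linarith)]
    simp

theorem polyBoundedDerivs_T : PolyBoundedDerivs
    (fun n x => (Polynomial.Chebyshev.T ℝ n).eval x)
    (fun n => {x | |x| ≤ 1 + ((n + 1 : ℝ) ^ 2)⁻¹}) := by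
  intro k
  refine ⟨2 ^ k * cosh 2, 2 * k, by positivity, fun n x hx => ?_⟩
  rw [norm_iteratedFDeriv_eq_norm_iteratedDeriv, iteratedDeriv_polynomial_eval]
  refine (abs_eval_iterate_derivative_T_le (M := cosh 2) (fun m hm => ?_) k n le_rfl).trans_eq ?_
  · refine abs_eval_T_le_cosh_two (by positivity) ?_ hx
    have : (m : ℝ) ≤ n + 1 := by exact_mod_cast Nat.le_succ_of_le hm
    gcongr
  · rw [mul_pow, ← pow_mul]; ring

theorem polyBoundedDerivs_cutoffT : PolyBoundedDerivs cutoffT (fun _ => univ) := by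
  have h (a b : ℝ) : ContDiff ℝ (⊤ : ℕ∞) fun x => smoothTransition (a * x + b) :=
    smoothTransition.contDiff.comp ((contDiff_const.mul contDiff_id).add contDiff_const)
  have key : PolyBoundedDerivs cutoffT (fun n => {x | |x| ≤ 1 + ((n + 1 : ℝ) ^ 2)⁻¹}) :=
    ((polyBoundedDerivs_smoothTransition_comp (fun n => by rw [abs_of_nonneg (by positivity)]) _).mul
      (polyBoundedDerivs_smoothTransition_comp
        (fun n => by rw [abs_neg, abs_of_nonneg (by positivity)]) _)
      (fun n => h _ _) (fun n => h _ _)).mul polyBoundedDerivs_T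
      (fun n => (h _ _).mul (h _ _)) (fun n => contDiff_polynomial_eval _)
  intro k
  obtain ⟨C, p, hC, hb⟩ := key k
  refine ⟨C, p, hC, fun n x _ => ?_⟩
  by_cases hx : |x| ≤ 1 + ((n + 1 : ℝ) ^ 2)⁻¹
  · exact hb n x hx
  · have h0 : cutoffT n =ᶠ[nhds x] fun _ => 0 := by
      filter_upwards [continuous_abs.continuousAt.eventually_const_lt (not_le.1 hx)] with y hy
      exact cutoffT_eq_zero n (le_of_lt hy)
    rw [(h0.iteratedFDeriv ℝ k).self_of_nhds]
    simp only [iteratedFDeriv_fun_zero, Pi.zero_apply, norm_zero]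
    positivity

theorem contDiff_tsum_cutoffT {a : ℕ → ℝ}
    (ha : ∀ s : ℕ, Summable fun n : ℕ => (n + 1 : ℝ) ^ s * |a n|) :
    ContDiff ℝ (⊤ : ℕ∞) fun x => ∑' n, a n * cutoffT n x := by
  choose C p hC hb using polyBoundedDerivs_cutoffT
  refine contDiff_tsum (v := fun k (n : ℕ) => C k * ((n + 1 : ℝ) ^ p k * |a n|))
    (fun n => contDiff_const.mul (contDiff_cutoffT n)) (fun k _ => (ha (p k)).mul_left (C k)) ?_
  intro k n x _
  have := iteratedFDeriv_const_smul_apply (𝕜 := ℝ) (i := k) (a := a n) (f := cutoffT n) (x := x)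
    ((contDiff_cutoffT n).of_le (by exact_mod_cast le_top)).contDiffAt
  have h2 : (fun x => a n * cutoffT n x) = a n • cutoffT n := rfl
  rw [h2, this, norm_smul, Real.norm_eq_abs]
  calc |a n| * _ ≤ |a n| * (C k * (n + 1 : ℝ) ^ p k) := by gcongr; exact hb k n x (mem_univ x)
    _ = _ := by ring

theorem integral_measureT_eq_setIntegral (h : ℝ → ℝ) :
    ∫ x, h x ∂Polynomial.Chebyshev.measureT = ∫ x in Ioo (-1 : ℝ) 1, h x / √(1 - x ^ 2) := by
  rw [Polynomial.Chebyshev.integral_measureT, intervalIntegral.integral_of_le (by norm_num),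
    integral_Ioc_eq_integral_Ioo]
  simp_rw [sqrt_inv, div_eq_mul_inv]

theorem integrable_measureT_iff (h : ℝ → ℝ) :
    Integrable h Polynomial.Chebyshev.measureT ↔
      IntegrableOn (fun x => h x / √(1 - x ^ 2)) (Ioo (-1 : ℝ) 1) := by
  rw [Polynomial.Chebyshev.measureT, restrict_withDensity (by measurability),
    integrable_withDensity_iff_integrable_smul₀ (by fun_prop), ← integrableOn_Ioc_iff_integrableOn_Ioo]
  refine integrable_congr (Filter.Eventually.of_forall fun x => ?_)
  simp [NNReal.smul_def, div_eq_mul_inv, mul_comm]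

instance : IsFiniteMeasure Polynomial.Chebyshev.measureT :=
  (integrable_const_iff_isFiniteMeasure (c := (1 : ℝ)) one_ne_zero).1
    (Polynomial.Chebyshev.integrable_measureT continuousOn_const)

theorem ae_measureT_mem_Icc : ∀ᵐ x ∂Polynomial.Chebyshev.measureT, x ∈ Icc (-1 : ℝ) 1 :=
  (ae_restrict_mem measurableSet_Ioc).mono fun _ hx => Ioc_subset_Icc_self hx

theorem ae_measureT_of_ae {p : ℝ → Prop}
    (h : ∀ᵐ x ∂(volume.restrict (Ioo (-1 : ℝ) 1)), p x) :
    ∀ᵐ x ∂Polynomial.Chebyshev.measureT, p x := by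
  rw [Measure.restrict_congr_set Ioo_ae_eq_Ioc] at h
  rw [Polynomial.Chebyshev.measureT, restrict_withDensity (by measurability)]
  exact (withDensity_absolutelyContinuous _ _).ae_le h

theorem Integrable.mul_continuous_measureT {h φ : ℝ → ℝ}
    (hh : Integrable h Polynomial.Chebyshev.measureT) (hφ : Continuous φ) :
    Integrable (fun x => h x * φ x) Polynomial.Chebyshev.measureT := by
  obtain ⟨C, hC⟩ := (isCompact_Icc (a := (-1 : ℝ)) (b := 1)).exists_bound_of_continuousOn
    hφ.continuousOn
  exact hh.mul_bdd (c := C) hφ.aestronglyMeasurable (ae_measureT_mem_Icc.mono hC)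

theorem fourierCheb_eq_integral_measureT (f : ℝ → ℝ) (n : ℕ) :
    fourierCheb f n = (if n = 0 then 1 else 2) / π *
      ∫ x, f x * (Polynomial.Chebyshev.T ℝ n).eval x ∂Polynomial.Chebyshev.measureT := by
  rw [integral_measureT_eq_setIntegral, fourierCheb]
  split_ifs with h
  · simp [h]
  · rfl

theorem integral_mul_polynomial_eq_zero {h : ℝ → ℝ}
    (hh : Integrable h Polynomial.Chebyshev.measureT)
    (h0 : ∀ n : ℕ, ∫ x, h x * (Polynomial.Chebyshev.T ℝ n).eval x
      ∂Polynomial.Chebyshev.measureT = 0) (p : Polynomial ℝ) :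
    ∫ x, h x * p.eval x ∂Polynomial.Chebyshev.measureT = 0 := by
  have hpow (k : ℕ) : ∀ m : ℤ, ∫ x, h x * (x ^ k * (Polynomial.Chebyshev.T ℝ m).eval x)
      ∂Polynomial.Chebyshev.measureT = 0 := by
    induction k with
    | zero =>
      intro m
      rw [← Polynomial.Chebyshev.T_natAbs]
      simpa using h0 m.natAbs
    | succ k ih =>
      intro m
      have hi (m : ℤ) : Integrable (fun x => h x * (x ^ k * (Polynomial.Chebyshev.T ℝ m).eval x))
          Polynomial.Chebyshev.measureT := Integrable.mul_continuous_measureT hh (by fun_prop)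
      have he : (fun x => h x * (x ^ (k + 1) * (Polynomial.Chebyshev.T ℝ m).eval x)) = fun x =>
          (1 / 2) * (h x * (x ^ k * (Polynomial.Chebyshev.T ℝ (m + 1)).eval x) +
            h x * (x ^ k * (Polynomial.Chebyshev.T ℝ (m - 1)).eval x)) := by
        funext x
        rw [Polynomial.Chebyshev.T_add_one]
        simp only [Polynomial.eval_sub, Polynomial.eval_mul, Polynomial.eval_ofNat,
          Polynomial.eval_X]
        ring
      rw [he, integral_const_mul, integral_add (hi _) (hi _), ih, ih]
      simp
  induction p using Polynomial.induction_on' with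
  | add p q hp hq =>
    simp_rw [Polynomial.eval_add, mul_add]
    rw [integral_add (Integrable.mul_continuous_measureT hh (by fun_prop))
      (Integrable.mul_continuous_measureT hh (by fun_prop)), hp, hq, add_zero]
  | monomial n a =>
    have := hpow n 0
    simp only [Polynomial.Chebyshev.T_zero, Polynomial.eval_one, mul_one] at this
    simp_rw [Polynomial.eval_monomial, mul_left_comm]
    rw [integral_const_mul, this, mul_zero]

theorem integral_mul_continuous_eq_zero {h : ℝ → ℝ}
    (hh : Integrable h Polynomial.Chebyshev.measureT)
    (h0 : ∀ n : ℕ, ∫ x, h x * (Polynomial.Chebyshev.T ℝ n).eval x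
      ∂Polynomial.Chebyshev.measureT = 0) {φ : ℝ → ℝ} (hφ : Continuous φ) :
    ∫ x, h x * φ x ∂Polynomial.Chebyshev.measureT = 0 := by
  set I := ∫ x, ‖h x‖ ∂Polynomial.Chebyshev.measureT
  have hI : 0 ≤ I := integral_nonneg fun _ => norm_nonneg _
  rw [← norm_le_zero_iff]
  refine le_of_forall_pos_le_add fun ε hε => ?_
  obtain ⟨p, hp⟩ := exists_polynomial_near_of_continuousOn (-1) 1 φ hφ.continuousOn
    (ε / (I + 1)) (by positivity)
  have h1 : ∫ x, h x * φ x ∂Polynomial.Chebyshev.measureT =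
      ∫ x, h x * (φ x - p.eval x) ∂Polynomial.Chebyshev.measureT := by
    simp_rw [mul_sub]
    rw [integral_sub (Integrable.mul_continuous_measureT hh hφ)
      (Integrable.mul_continuous_measureT hh (by fun_prop)),
      integral_mul_polynomial_eq_zero hh h0, sub_zero]
  rw [h1, zero_add]
  calc ‖∫ x, h x * (φ x - p.eval x) ∂Polynomial.Chebyshev.measureT‖
      ≤ ∫ x, ‖h x‖ * (ε / (I + 1)) ∂Polynomial.Chebyshev.measureT := by
        refine norm_integral_le_of_norm_le (hh.norm.mul_const _) ?_
        filter_upwards [ae_measureT_mem_Icc] with x hx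
        rw [norm_mul, norm_sub_rev]
        gcongr
        exact (hp x hx).le
    _ = I * (ε / (I + 1)) := integral_mul_const _ _
    _ ≤ (I + 1) * (ε / (I + 1)) := by gcongr; linarith
    _ = ε := by field_simp

/-- The Chebyshev polynomials are complete: an integrable function orthogonal to all of them
vanishes almost everywhere. -/
theorem ae_eq_zero_of_integral_mul_T_eq_zero {h : ℝ → ℝ}
    (hh : Integrable h Polynomial.Chebyshev.measureT)
    (h0 : ∀ n : ℕ, ∫ x, h x * (Polynomial.Chebyshev.T ℝ n).eval x
      ∂Polynomial.Chebyshev.measureT = 0) :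
    ∀ᵐ x ∂(volume.restrict (Ioo (-1 : ℝ) 1)), h x = 0 := by
  rw [ae_restrict_iff' measurableSet_Ioo]
  have hint := (integrable_measureT_iff h).1 hh
  have := isOpen_Ioo.ae_eq_zero_of_integral_contDiff_smul_eq_zero hint.locallyIntegrableOn ?_
  · filter_upwards [this] with x hx hmem
    have hpos : 0 < √(1 - x ^ 2) := sqrt_pos.2 (by nlinarith [hmem.1, hmem.2])
    simpa [hpos.ne'] using hx hmem
  · intro φ hφ _ hsupp
    rw [← integral_mul_continuous_eq_zero hh h0 hφ.continuous, integral_measureT_eq_setIntegral,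
      ← setIntegral_eq_integral_of_forall_compl_eq_zero (s := Ioo (-1 : ℝ) 1)]
    · congr 1 with x
      simp only [smul_eq_mul]
      ring
    · intro x hx
      rw [image_eq_zero_of_notMem_tsupport fun hx' => hx (hsupp hx'), zero_smul]

theorem integrable_measureT_of_sq {f : ℝ → ℝ} (hmeas : Measurable f)
    (hL2 : IntegrableOn (fun x => f x ^ 2 / √(1 - x ^ 2)) (Ioo (-1 : ℝ) 1)) :
    Integrable f Polynomial.Chebyshev.measureT := by
  rw [← integrable_measureT_iff fun x => f x ^ 2] at hL2
  exact ((memLp_two_iff_integrable_sq hmeas.aestronglyMeasurable).2 hL2).integrable one_le_two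

theorem summable_pow_mul_abs_of_summable_sq {a : ℕ → ℝ}
    (ha : ∀ s : ℕ, Summable fun n : ℕ => (1 + (n : ℝ) ^ 2) ^ s * a n ^ 2) (s : ℕ) :
    Summable fun n : ℕ => (n + 1 : ℝ) ^ s * |a n| := by
  have h1 : Summable fun n : ℕ => ((n + 1 : ℝ) ^ 2)⁻¹ := by
    have := (summable_nat_add_iff 1).2 (Real.summable_nat_pow_inv.2 one_lt_two)
    simpa using this
  refine Summable.of_nonneg_of_le (fun n => by positivity) (fun n => ?_)
    (((ha (s + 1)).mul_left (2 ^ (s + 1))).add h1)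
  have h2 : (n + 1 : ℝ) ^ 2 ≤ 2 * (1 + (n : ℝ) ^ 2) := by nlinarith [sq_nonneg ((n : ℝ) - 1)]
  have h3 : ((n + 1 : ℝ) ^ (s + 1) * |a n|) ^ 2 ≤
      2 ^ (s + 1) * ((1 + (n : ℝ) ^ 2) ^ (s + 1) * a n ^ 2) := by
    rw [mul_pow, sq_abs, ← pow_mul, mul_comm (s + 1), pow_mul, ← mul_assoc, ← mul_pow]
    gcongr
  have h4 : (n + 1 : ℝ) ^ s * |a n| = ((n + 1 : ℝ) ^ (s + 1) * |a n|) * (n + 1 : ℝ)⁻¹ := by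
    field_simp
    ring
  have h5 : (((n + 1 : ℝ) ^ 2)⁻¹) = ((n + 1 : ℝ)⁻¹) ^ 2 := by rw [inv_pow]
  rw [h4, h5]
  nlinarith [two_mul_le_add_sq ((n + 1 : ℝ) ^ (s + 1) * |a n|) ((n + 1 : ℝ)⁻¹),
    sq_nonneg ((n + 1 : ℝ) ^ (s + 1) * |a n|), sq_nonneg ((n + 1 : ℝ)⁻¹)]

theorem abs_eval_T_le_one {x : ℝ} (hx : x ∈ Icc (-1) 1) (n : ℕ) :
    |(Polynomial.Chebyshev.T ℝ n).eval x| ≤ 1 := by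
  rw [← cos_arccos hx.1 hx.2, Polynomial.Chebyshev.T_real_cos]
  exact abs_cos_le_one _

theorem integral_tsum_cutoffT_mul_T {a : ℕ → ℝ} (ha : Summable fun n => |a n|) (m : ℕ) :
    ∫ x, (∑' n, a n * cutoffT n x) * (Polynomial.Chebyshev.T ℝ m).eval x
      ∂Polynomial.Chebyshev.measureT = a m * (if m = 0 then π else π / 2) := by
  set μ := Polynomial.Chebyshev.measureT
  set F : ℕ → ℝ → ℝ := fun n x =>
    a n * ((Polynomial.Chebyshev.T ℝ n).eval x * (Polynomial.Chebyshev.T ℝ m).eval x)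
  have hF (n : ℕ) : Integrable (F n) μ :=
    Polynomial.Chebyshev.integrable_measureT (by fun_prop)
  have hsum : Summable fun n => ∫ x, ‖F n x‖ ∂μ := by
    refine Summable.of_nonneg_of_le (fun n => integral_nonneg fun _ => norm_nonneg _) (fun n => ?_)
      (ha.mul_right (μ.real univ))
    calc ∫ x, ‖F n x‖ ∂μ ≤ ∫ x, |a n| ∂μ := by
          refine integral_mono_ae (hF n).norm (integrable_const _) ?_
          filter_upwards [ae_measureT_mem_Icc] with x hx
          rw [norm_mul, norm_mul]
          exact mul_le_of_le_one_right (norm_nonneg _)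
            (mul_le_one₀ (abs_eval_T_le_one hx n) (norm_nonneg _) (abs_eval_T_le_one hx m))
      _ = |a n| * μ.real univ := by simp [mul_comm]
  have h1 := hasSum_integral_of_summable_integral_norm hF hsum
  have h2 : ∫ x, (∑' n, a n * cutoffT n x) * (Polynomial.Chebyshev.T ℝ m).eval x ∂μ =
      ∫ x, ∑' n, F n x ∂μ := by
    refine integral_congr_ae ?_
    filter_upwards [ae_measureT_mem_Icc] with x hx
    rw [← tsum_mul_right]
    exact tsum_congr fun n => by rw [cutoffT_eq_of_mem n hx, mul_assoc]
  rw [h2]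
  refine h1.unique ?_
  convert hasSum_single m fun n hn => ?_ using 1
  · simp only [F]
    rw [integral_const_mul]
    split_ifs with h
    · subst h
      rw [Nat.cast_zero, Polynomial.Chebyshev.integral_eval_T_real_mul_self_measureT_zero]
    · rw [Polynomial.Chebyshev.integral_T_real_mul_self_measureT_of_ne_zero h]
  · simp only [F]
    rw [integral_const_mul,
      Polynomial.Chebyshev.integral_eval_T_real_mul_eval_T_real_measureT_of_ne hn, mul_zero]

/-- Two integrations by parts: `n ^ 2` times a Chebyshev coefficient of `g` is minus the coefficient
of the function obtained from `g` by the Chebyshev differential operator. -/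
theorem sq_mul_integral_comp_cos_mul_cos {g : ℝ → ℝ} (hg : ContDiff ℝ (⊤ : ℕ∞) g) (n : ℕ) :
    (n : ℝ) ^ 2 * ∫ θ in 0..π, g (cos θ) * cos (n * θ) =
      -∫ θ in 0..π,
        ((1 - cos θ ^ 2) * deriv (deriv g) (cos θ) - cos θ * deriv g (cos θ)) * cos (n * θ) := by
  have hg1 : ContDiff ℝ (⊤ : ℕ∞) (deriv g) := (contDiff_infty_iff_deriv.1 hg).2
  have hg2 : ContDiff ℝ (⊤ : ℕ∞) (deriv (deriv g)) := (contDiff_infty_iff_deriv.1 hg1).2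
  have c0 := hg.continuous
  have c1 := hg1.continuous
  have c2 := hg2.continuous
  have hd0 (x : ℝ) : HasDerivAt g (deriv g x) x := (hg.differentiable (by simp) x).hasDerivAt
  have hd1 (x : ℝ) : HasDerivAt (deriv g) (deriv (deriv g) x) x :=
    (hg1.differentiable (by simp) x).hasDerivAt
  have key : ∫ θ in 0..π, ((n : ℝ) ^ 2 * (g (cos θ) * cos (n * θ)) +
      ((1 - cos θ ^ 2) * deriv (deriv g) (cos θ) - cos θ * deriv g (cos θ)) * cos (n * θ)) = 0 := by
    rw [intervalIntegral.integral_eq_sub_of_hasDerivAt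
      (f := fun θ => n * (g (cos θ) * sin (n * θ)) - sin θ * deriv g (cos θ) * cos (n * θ))
      (fun θ _ => ?_) (by apply Continuous.intervalIntegrable; fun_prop)]
    · simp [sin_nat_mul_pi]
    · have h1 : HasDerivAt (fun θ : ℝ => (n : ℝ) * θ) n θ := by
        simpa using (hasDerivAt_id θ).const_mul (n : ℝ)
      have h2 := ((hd0 (cos θ)).comp θ (hasDerivAt_cos θ)).mul h1.sin
      have h3 := ((hasDerivAt_sin θ).mul ((hd1 (cos θ)).comp θ (hasDerivAt_cos θ))).mul h1.cos
      refine ((h2.const_mul (n : ℝ)).sub h3).congr_deriv ?_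
      simp only [Function.comp_apply, Pi.mul_apply]
      rw [← sin_sq]
      ring
  rw [intervalIntegral.integral_add (by apply Continuous.intervalIntegrable; fun_prop)
    (by apply Continuous.intervalIntegrable; fun_prop),
    intervalIntegral.integral_const_mul] at key
  linarith

theorem exists_bound_integral_comp_cos_mul_cos (k : ℕ) {g : ℝ → ℝ}
    (hg : ContDiff ℝ (⊤ : ℕ∞) g) :
    ∃ C, ∀ n : ℕ, |((n : ℝ) ^ 2) ^ k * ∫ θ in 0..π, g (cos θ) * cos (n * θ)| ≤ C := by
  induction k generalizing g with
  | zero =>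
    obtain ⟨C, hC⟩ := (isCompact_Icc (a := (-1 : ℝ)) (b := 1)).exists_bound_of_continuousOn
      hg.continuous.continuousOn
    refine ⟨C * |π - 0|, fun n => ?_⟩
    rw [pow_zero, one_mul, ← Real.norm_eq_abs]
    refine intervalIntegral.norm_integral_le_of_norm_le_const fun θ _ => ?_
    rw [norm_mul]
    exact (mul_le_of_le_one_right (norm_nonneg _) (abs_cos_le_one _)).trans
      (hC _ (cos_mem_Icc θ))
  | succ k ih =>
    have hg1 : ContDiff ℝ (⊤ : ℕ∞) (deriv g) := (contDiff_infty_iff_deriv.1 hg).2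
    have hg2 : ContDiff ℝ (⊤ : ℕ∞) (deriv (deriv g)) := (contDiff_infty_iff_deriv.1 hg1).2
    obtain ⟨C, hC⟩ := ih (g := fun x => (1 - x ^ 2) * deriv (deriv g) x - x * deriv g x)
      (((contDiff_const.sub (contDiff_id.pow 2)).mul hg2).sub (contDiff_id.mul hg1))
    refine ⟨C, fun n => ?_⟩
    rw [pow_succ, mul_assoc, sq_mul_integral_comp_cos_mul_cos hg, mul_neg, abs_neg]
    exact hC n

theorem summable_sq_fourierCheb_of_contDiff {g : ℝ → ℝ} (hg : ContDiff ℝ (⊤ : ℕ∞) g) (s : ℕ) :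
    Summable fun n : ℕ => (1 + (n : ℝ) ^ 2) ^ s * fourierCheb g n ^ 2 := by
  obtain ⟨C, hC⟩ := exists_bound_integral_comp_cos_mul_cos (s + 1) hg
  rw [← summable_nat_add_iff 1]
  have h1 : Summable fun n : ℕ => (((n + 1 : ℕ) : ℝ) ^ 2)⁻¹ :=
    (summable_nat_add_iff 1).2 (Real.summable_nat_pow_inv.2 one_lt_two)
  refine Summable.of_nonneg_of_le (fun n => by positivity) (fun n => ?_)
    (h1.mul_left (2 ^ s * (2 / π * C) ^ 2))
  have hn := hC (n + 1)
  rw [fourierCheb_eq_integral_measureT, if_neg n.succ_ne_zero,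
    Polynomial.Chebyshev.integral_measureT_eq_integral_cos]
  simp_rw [Polynomial.Chebyshev.T_real_cos]
  rw [Int.cast_natCast]
  set I := ∫ θ in 0..π, g (cos θ) * cos ((n + 1 : ℕ) * θ)
  set N := ((n + 1 : ℕ) : ℝ) ^ 2
  have hN : 1 ≤ N := one_le_pow₀ (by simp)
  have h2 : (N ^ (s + 1) * I) ^ 2 ≤ C ^ 2 := sq_le_sq.2 (hn.trans (le_abs_self C))
  calc (1 + N) ^ s * (2 / π * I) ^ 2 ≤ (2 * N) ^ s * (2 / π * I) ^ 2 := by gcongr; linarith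
    _ = 2 ^ s * (2 / π) ^ 2 * (N ^ s * I ^ 2) := by ring
    _ ≤ 2 ^ s * (2 / π) ^ 2 * (C ^ 2 * N⁻¹) := by
      refine mul_le_mul_of_nonneg_left ?_ (by positivity)
      rw [le_mul_inv_iff₀ (by positivity)]
      refine le_trans ?_ h2
      rw [mul_pow, mul_right_comm, ← pow_succ, ← pow_mul (N)]
      gcongr
      omega
    _ = _ := by ring

theorem fourierCheb_congr_ae {f g : ℝ → ℝ}
    (h : ∀ᵐ x ∂(volume.restrict (Ioo (-1 : ℝ) 1)), f x = g x) : fourierCheb f = fourierCheb g := by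
  funext n
  rw [fourierCheb_eq_integral_measureT, fourierCheb_eq_integral_measureT]
  congr 1
  refine integral_congr_ae ?_
  filter_upwards [ae_measureT_of_ae h] with x hx
  rw [hx]

/-- `T^∞ = C^∞([-1,1])`: a function in `L²_{1/ω}` has rapidly decaying
Fourier–Chebyshev coefficients iff it coincides a.e. on `(-1,1)` with a smooth
function on `ℝ`. -/
theorem Tinfty_eq_Cinfty (f : ℝ → ℝ) (hmeas : Measurable f)
    (hL2 : IntegrableOn (fun x => f x ^ 2 / Real.sqrt (1 - x ^ 2)) (Ioo (-1 : ℝ) 1)) :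
    (∀ s : ℕ, Summable (fun n : ℕ => (1 + (n : ℝ) ^ 2) ^ s * fourierCheb f n ^ 2)) ↔
    (∃ g : ℝ → ℝ, ContDiff ℝ (⊤ : ℕ∞) g ∧
      ∀ᵐ x ∂(volume.restrict (Ioo (-1 : ℝ) 1)), f x = g x) := by
  constructor
  · intro hs
    have ha := summable_pow_mul_abs_of_summable_sq hs
    have hg := contDiff_tsum_cutoffT ha
    refine ⟨_, hg, ?_⟩
    have hf := integrable_measureT_of_sq hmeas hL2
    have hgi := Polynomial.Chebyshev.integrable_measureT hg.continuous.continuousOn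
    have h0 := ae_eq_zero_of_integral_mul_T_eq_zero (hf.sub hgi) fun m => ?_
    · filter_upwards [h0] with x hx using sub_eq_zero.1 hx
    · simp only [Pi.sub_apply, sub_mul]
      rw [integral_sub (Integrable.mul_continuous_measureT hf (by fun_prop))
        (Integrable.mul_continuous_measureT hgi (by fun_prop)),
        integral_tsum_cutoffT_mul_T (by simpa using ha 0), fourierCheb_eq_integral_measureT]
      split_ifs <;> field_simp <;> ring
  · rintro ⟨g, hg, hfg⟩ s
    rw [fourierCheb_congr_ae hfg]
    exact summable_sq_fourierCheb_of_contDiff hg s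
end
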